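/- For every R ≥ R₀ one has (1/R) ∫₀^{2π} |∂_R η(R,θ)| dθ ≤ 𝓔(R) ≤ 𝓔(R₀) and (1/R) ∫₀^{2π} |∂_θ η(R,θ)| dθ ≤ 𝓔(R) ≤ 𝓔(R₀). -/

import Mathlib

open Real MeasureTheory Set

/-- Partial derivative with respect to the first (time) variable `R`. -/
noncomputable def pdR (f : ℝ → ℝ → ℝ) (R θ : ℝ) : ℝ := deriv (fun r => f r θ) R

/-- Partial derivative with respect to the second (space) variable `θ`. -/
noncomputable def pdT (f : ℝ → ℝ → ℝ) (R θ : ℝ) : ℝ := deriv (fun t => f R t) θ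

lemma slice_R {g : ℝ × ℝ → ℝ} {R θ : ℝ} (hg : DifferentiableAt ℝ g (R, θ)) :
    HasDerivAt (fun r => g (r, θ)) (fderiv ℝ g (R, θ) (1, 0)) R := by
  have h1 : HasDerivAt (fun r : ℝ => (r, θ)) ((1 : ℝ), (0 : ℝ)) R :=
    (hasDerivAt_id R).prodMk (hasDerivAt_const R θ)
  exact hg.hasFDerivAt.comp_hasDerivAt R h1

lemma slice_T {g : ℝ × ℝ → ℝ} {R θ : ℝ} (hg : DifferentiableAt ℝ g (R, θ)) :
    HasDerivAt (fun t => g (R, t)) (fderiv ℝ g (R, θ) (0, 1)) θ := by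
  have h1 : HasDerivAt (fun t : ℝ => (R, t)) ((0 : ℝ), (1 : ℝ)) θ :=
    (hasDerivAt_const θ R).prodMk (hasDerivAt_id θ)
  exact hg.hasFDerivAt.comp_hasDerivAt θ h1

lemma sm_diff {f : ℝ → ℝ → ℝ} (hf : ContDiff ℝ (⊤ : ℕ∞) (Function.uncurry f)) :
    Differentiable ℝ (Function.uncurry f) := hf.differentiable (by simp)

lemma pdR_eq {f : ℝ → ℝ → ℝ} (hf : ContDiff ℝ (⊤ : ℕ∞) (Function.uncurry f)) (R θ : ℝ) :
    pdR f R θ = fderiv ℝ (Function.uncurry f) (R, θ) (1, 0) :=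
  (slice_R (g := Function.uncurry f) (sm_diff hf (R, θ))).deriv

lemma pdT_eq {f : ℝ → ℝ → ℝ} (hf : ContDiff ℝ (⊤ : ℕ∞) (Function.uncurry f)) (R θ : ℝ) :
    pdT f R θ = fderiv ℝ (Function.uncurry f) (R, θ) (0, 1) :=
  (slice_T (g := Function.uncurry f) (sm_diff hf (R, θ))).deriv

lemma has_R {f : ℝ → ℝ → ℝ} (hf : ContDiff ℝ (⊤ : ℕ∞) (Function.uncurry f)) (R θ : ℝ) :
    HasDerivAt (fun r => f r θ) (pdR f R θ) R := by
  rw [pdR_eq hf]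
  exact slice_R (g := Function.uncurry f) (sm_diff hf (R, θ))

lemma has_T {f : ℝ → ℝ → ℝ} (hf : ContDiff ℝ (⊤ : ℕ∞) (Function.uncurry f)) (R θ : ℝ) :
    HasDerivAt (fun t => f R t) (pdT f R θ) θ := by
  rw [pdT_eq hf]
  exact slice_T (g := Function.uncurry f) (sm_diff hf (R, θ))

lemma sm_R {f : ℝ → ℝ → ℝ} (hf : ContDiff ℝ (⊤ : ℕ∞) (Function.uncurry f)) :
    ContDiff ℝ (⊤ : ℕ∞) (Function.uncurry (pdR f)) := by
  have : Function.uncurry (pdR f) = fun p => fderiv ℝ (Function.uncurry f) p (1, 0) := by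
    ext ⟨R, θ⟩; exact pdR_eq hf R θ
  rw [this]
  exact (hf.fderiv_right (m := (⊤ : ℕ∞)) (by simp)).clm_apply contDiff_const

lemma sm_T {f : ℝ → ℝ → ℝ} (hf : ContDiff ℝ (⊤ : ℕ∞) (Function.uncurry f)) :
    ContDiff ℝ (⊤ : ℕ∞) (Function.uncurry (pdT f)) := by
  have : Function.uncurry (pdT f) = fun p => fderiv ℝ (Function.uncurry f) p (0, 1) := by
    ext ⟨R, θ⟩; exact pdT_eq hf R θ
  rw [this]
  exact (hf.fderiv_right (m := (⊤ : ℕ∞)) (by simp)).clm_apply contDiff_const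

lemma mixed {f : ℝ → ℝ → ℝ} (hf : ContDiff ℝ (⊤ : ℕ∞) (Function.uncurry f)) (R θ : ℝ) :
    pdR (pdT f) R θ = pdT (pdR f) R θ := by
  have hs : IsSymmSndFDerivAt ℝ (Function.uncurry f) (R, θ) :=
    hf.contDiffAt.isSymmSndFDerivAt (by
      rw [minSmoothness_of_isRCLikeNormedField]
      exact WithTop.coe_le_coe.2 le_top)
  have hd : Differentiable ℝ (fderiv ℝ (Function.uncurry f)) :=
    (hf.fderiv_right (m := (⊤ : ℕ∞)) (by simp)).differentiable (by simp)
  have e1 : Function.uncurry (pdR f) = fun p => fderiv ℝ (Function.uncurry f) p (1, 0) := by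
    ext ⟨R, θ⟩; exact pdR_eq hf R θ
  have e2 : Function.uncurry (pdT f) = fun p => fderiv ℝ (Function.uncurry f) p (0, 1) := by
    ext ⟨R, θ⟩; exact pdT_eq hf R θ
  have key : ∀ v w : ℝ × ℝ, fderiv ℝ (fun p => fderiv ℝ (Function.uncurry f) p v) (R, θ) w
      = fderiv ℝ (fderiv ℝ (Function.uncurry f)) (R, θ) w v := by
    intro v w
    rw [fderiv_clm_apply (hd _) (differentiableAt_const v)]
    simp
  rw [pdR_eq (sm_T hf), pdT_eq (sm_R hf), e1, e2, key, key]
  exact hs.eq _ _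

lemma per_R {f : ℝ → ℝ → ℝ} (hp : ∀ R θ, f R (θ + 2 * π) = f R θ) (R θ : ℝ) :
    pdR f R (θ + 2 * π) = pdR f R θ := by
  simp only [pdR, hp]

lemma per_T {f : ℝ → ℝ → ℝ} (hp : ∀ R θ, f R (θ + 2 * π) = f R θ) (R θ : ℝ) :
    pdT f R (θ + 2 * π) = pdT f R θ := by
  have := deriv_comp_add_const (fun t => f R t) (2 * π) θ
  simp only [pdT, ← this, hp]

/-- energy density -/
noncomputable def dens (U A : ℝ → ℝ → ℝ) (p : ℝ × ℝ) : ℝ :=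
  (pdR U p.1 p.2) ^ 2 + (pdT U p.1 p.2) ^ 2
    + exp (4 * U p.1 p.2) / (4 * p.1 ^ 2) * ((pdR A p.1 p.2) ^ 2 + (pdT A p.1 p.2) ^ 2)

/-- minus the energy flux -/
noncomputable def flux (U A : ℝ → ℝ → ℝ) (p : ℝ × ℝ) : ℝ :=
  -(2 * pdR U p.1 p.2 * pdT U p.1 p.2
    + exp (4 * U p.1 p.2) / (2 * p.1 ^ 2) * (pdR A p.1 p.2 * pdT A p.1 p.2))

lemma dens_cd {U A : ℝ → ℝ → ℝ}
    (hU : ContDiff ℝ (⊤ : ℕ∞) (Function.uncurry U))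
    (hA : ContDiff ℝ (⊤ : ℕ∞) (Function.uncurry A)) {p : ℝ × ℝ} (hp : p.1 ≠ 0) :
    ContDiffAt ℝ (⊤ : ℕ∞) (dens U A) p := by
  have a1 : ContDiffAt ℝ (⊤ : ℕ∞) (fun p : ℝ × ℝ => U p.1 p.2) p := hU.contDiffAt
  have a2 : ContDiffAt ℝ (⊤ : ℕ∞) (fun p : ℝ × ℝ => pdR U p.1 p.2) p := (sm_R hU).contDiffAt
  have a3 : ContDiffAt ℝ (⊤ : ℕ∞) (fun p : ℝ × ℝ => pdT U p.1 p.2) p := (sm_T hU).contDiffAt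
  have a4 : ContDiffAt ℝ (⊤ : ℕ∞) (fun p : ℝ × ℝ => pdR A p.1 p.2) p := (sm_R hA).contDiffAt
  have a5 : ContDiffAt ℝ (⊤ : ℕ∞) (fun p : ℝ × ℝ => pdT A p.1 p.2) p := (sm_T hA).contDiffAt
  exact ((a2.pow 2).add (a3.pow 2)).add ((((contDiffAt_const.mul a1).exp).div
    (contDiffAt_const.mul (contDiffAt_fst.pow 2)) (by positivity)).mul
      ((a4.pow 2).add (a5.pow 2)))

lemma flux_cd {U A : ℝ → ℝ → ℝ}
    (hU : ContDiff ℝ (⊤ : ℕ∞) (Function.uncurry U))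
    (hA : ContDiff ℝ (⊤ : ℕ∞) (Function.uncurry A)) {p : ℝ × ℝ} (hp : p.1 ≠ 0) :
    ContDiffAt ℝ (⊤ : ℕ∞) (flux U A) p := by
  have a1 : ContDiffAt ℝ (⊤ : ℕ∞) (fun p : ℝ × ℝ => U p.1 p.2) p := hU.contDiffAt
  have a2 : ContDiffAt ℝ (⊤ : ℕ∞) (fun p : ℝ × ℝ => pdR U p.1 p.2) p := (sm_R hU).contDiffAt
  have a3 : ContDiffAt ℝ (⊤ : ℕ∞) (fun p : ℝ × ℝ => pdT U p.1 p.2) p := (sm_T hU).contDiffAt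
  have a4 : ContDiffAt ℝ (⊤ : ℕ∞) (fun p : ℝ × ℝ => pdR A p.1 p.2) p := (sm_R hA).contDiffAt
  have a5 : ContDiffAt ℝ (⊤ : ℕ∞) (fun p : ℝ × ℝ => pdT A p.1 p.2) p := (sm_T hA).contDiffAt
  exact (((contDiffAt_const.mul a2).mul a3).add ((((contDiffAt_const.mul a1).exp).div
    (contDiffAt_const.mul (contDiffAt_fst.pow 2)) (by positivity)).mul
      (a4.mul a5))).neg

lemma div_nonpos {U A : ℝ → ℝ → ℝ}
    (hU : ContDiff ℝ (⊤ : ℕ∞) (Function.uncurry U))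
    (hA : ContDiff ℝ (⊤ : ℕ∞) (Function.uncurry A)) (R θ : ℝ) (hR : 0 < R)
    (eqU : deriv (fun r => r * pdR U r θ) R - deriv (fun t => R * pdT U R t) θ
        = exp (4 * U R θ) / (2 * R) * ((pdR A R θ) ^ 2 - (pdT A R θ) ^ 2))
    (eqA : deriv (fun r => r⁻¹ * pdR A r θ) R - deriv (fun t => R⁻¹ * pdT A R t) θ
        = 4 / R * (-(pdR U R θ * pdR A R θ) + pdT U R θ * pdT A R θ)) :
    fderiv ℝ (dens U A) (R, θ) (1, 0) + fderiv ℝ (flux U A) (R, θ) (0, 1) ≤ 0 := by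
  have hR0 : R ≠ 0 := hR.ne'
  have h1 := (slice_R ((dens_cd hU hA (p := (R, θ)) hR0).differentiableAt (by simp))).deriv
  have h2 := (slice_T ((flux_cd hU hA (p := (R, θ)) hR0).differentiableAt (by simp))).deriv
  have d1 : HasDerivAt (fun r => dens U A (r, θ)) _ R :=
    (((has_R (sm_R hU) R θ).pow 2).add ((has_R (sm_T hU) R θ).pow 2)).add
      (((((has_R hU R θ).const_mul 4).exp).div (((hasDerivAt_id R).pow 2).const_mul 4)
        (by simp [hR0])).mul (((has_R (sm_R hA) R θ).pow 2).add ((has_R (sm_T hA) R θ).pow 2)))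
  have d2 : HasDerivAt (fun t => flux U A (R, t)) _ θ :=
    ((((has_T (sm_R hU) R θ).const_mul 2).mul (has_T (sm_T hU) R θ)).add
      (((((has_T hU R θ).const_mul 4).exp).div_const (2 * R ^ 2)).mul
        ((has_T (sm_R hA) R θ).mul (has_T (sm_T hA) R θ)))).neg
  have u1 : HasDerivAt (fun r => r * pdR U r θ) _ R :=
    (hasDerivAt_id R).mul (has_R (sm_R hU) R θ)
  have u2 : HasDerivAt (fun r => r⁻¹ * pdR A r θ) _ R :=
    (hasDerivAt_inv hR0).mul (has_R (sm_R hA) R θ)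
  have u3 : HasDerivAt (fun t => R * pdT U R t) _ θ := (has_T (sm_T hU) R θ).const_mul R
  have u4 : HasDerivAt (fun t => R⁻¹ * pdT A R t) _ θ := (has_T (sm_T hA) R θ).const_mul R⁻¹
  rw [u1.deriv, u3.deriv] at eqU
  rw [u2.deriv, u4.deriv] at eqA
  rw [← h1, ← h2, d1.deriv, d2.deriv, mixed hU, mixed hA]
  simp only [id, Pi.mul_apply, Pi.pow_apply, Pi.add_apply, Pi.div_apply] at eqU eqA ⊢
  generalize pdR (pdR U) R θ = Utt at *
  generalize pdR (pdR A) R θ = Att at *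
  generalize pdT (pdT U) R θ = Uxx at *
  generalize pdT (pdT A) R θ = Axx at *
  generalize pdT (pdR U) R θ = Utx at *
  generalize pdT (pdR A) R θ = Atx at *
  generalize pdR U R θ = Ut at *
  generalize pdR A R θ = At at *
  generalize pdT U R θ = Ux at *
  generalize pdT A R θ = Ax at *
  have hX : 0 < exp (4 * U R θ) := exp_pos _
  generalize exp (4 * U R θ) = X at *
  have eU : Utt = Uxx - Ut / R + X / (2 * R ^ 2) * (At ^ 2 - Ax ^ 2) := by
    field_simp at eqU ⊢
    linarith
  have eA : Att = Axx + At / R + 4 * (-(Ut * At) + Ux * Ax) := by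
    field_simp at eqA ⊢
    linarith
  have : 0 ≤ 2 / R * (Ut ^ 2 + X / (4 * R ^ 2) * Ax ^ 2) := by positivity
  refine le_trans (le_of_eq ?_) (neg_nonpos.2 this)
  subst eU eA
  field_simp
  push_cast
  ring

theorem stmt2
    (R₀ : ℝ) (hR₀ : 0 < R₀)
    (U A : ℝ → ℝ → ℝ)
    (hU : ContDiff ℝ (⊤ : ℕ∞) (Function.uncurry U))
    (hA : ContDiff ℝ (⊤ : ℕ∞) (Function.uncurry A))
    (hUper : ∀ R θ, U R (θ + 2 * π) = U R θ)
    (hAper : ∀ R θ, A R (θ + 2 * π) = A R θ)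
    (eqU : ∀ R, R₀ ≤ R → ∀ θ : ℝ,
      deriv (fun r => r * pdR U r θ) R - deriv (fun t => R * pdT U R t) θ
        = exp (4 * U R θ) / (2 * R) * ((pdR A R θ) ^ 2 - (pdT A R θ) ^ 2))
    (eqA : ∀ R, R₀ ≤ R → ∀ θ : ℝ,
      deriv (fun r => r⁻¹ * pdR A r θ) R - deriv (fun t => R⁻¹ * pdT A R t) θ
        = 4 / R * (-(pdR U R θ * pdR A R θ) + pdT U R θ * pdT A R θ))
    (η : ℝ → ℝ → ℝ)
    (hη : ContDiff ℝ (⊤ : ℕ∞) (Function.uncurry η))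
    (hηper : ∀ R θ, η R (θ + 2 * π) = η R θ)
    (conηR : ∀ R, R₀ ≤ R → ∀ θ : ℝ,
      pdR η R θ = R * ((pdR U R θ) ^ 2 + (pdT U R θ) ^ 2
        + exp (4 * U R θ) / (4 * R ^ 2) * ((pdR A R θ) ^ 2 + (pdT A R θ) ^ 2)))
    (conηT : ∀ R, R₀ ≤ R → ∀ θ : ℝ,
      pdT η R θ = R * (2 * pdR U R θ * pdT U R θ
        + exp (4 * U R θ) / (2 * R ^ 2) * (pdR A R θ * pdT A R θ)))
    (E : ℝ → ℝ)
    (hE : ∀ R, E R = ∫ θ in (0:ℝ)..(2 * π),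
      (pdR U R θ) ^ 2 + (pdT U R θ) ^ 2
        + exp (4 * U R θ) / (4 * R ^ 2) * ((pdR A R θ) ^ 2 + (pdT A R θ) ^ 2))
 :
    ∀ R, R₀ ≤ R →
      (1 / R * ∫ θ in (0:ℝ)..(2 * π), |pdR η R θ| ≤ E R)
        ∧ (1 / R * ∫ θ in (0:ℝ)..(2 * π), |pdT η R θ| ≤ E R)
        ∧ E R ≤ E R₀ := by
  have hπ : (0:ℝ) ≤ 2 * π := by positivity
  have hdc : ∀ R, R₀ ≤ R → ∀ θ, ContDiffAt ℝ (⊤ : ℕ∞) (dens U A) (R, θ) := fun R hR θ =>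
    dens_cd hU hA (p := (R, θ)) (hR₀.trans_le hR).ne'
  have hfc : ∀ R, R₀ ≤ R → ∀ θ, ContDiffAt ℝ (⊤ : ℕ∞) (flux U A) (R, θ) := fun R hR θ =>
    flux_cd hU hA (p := (R, θ)) (hR₀.trans_le hR).ne'
  have hE' : ∀ R, E R = ∫ θ in (0:ℝ)..(2 * π), dens U A (R, θ) := hE
  intro R hR
  have hRpos : 0 < R := hR₀.trans_le hR
  have hcont : Continuous (fun θ => dens U A (R, θ)) := by
    rw [continuous_iff_continuousAt]
    intro θ
    exact (slice_T ((hdc R hR θ).differentiableAt (by simp))).continuousAt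
  have hpos : ∀ θ, 0 ≤ dens U A (R, θ) := fun θ => by unfold dens; positivity
  refine ⟨?_, ?_, ?_⟩
  · rw [hE', ← intervalIntegral.integral_const_mul]
    refine le_of_eq (intervalIntegral.integral_congr fun θ _ => ?_)
    have : pdR η R θ = R * dens U A (R, θ) := conηR R hR θ
    simp only [this]
    rw [abs_of_nonneg (mul_nonneg hRpos.le (hpos θ))]
    field_simp
  · rw [hE', ← intervalIntegral.integral_const_mul]
    have hc2 : Continuous (fun θ => pdT η R θ) :=
      (sm_T hη).continuous.comp (by fun_prop : Continuous fun θ : ℝ => (R, θ))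
    refine intervalIntegral.integral_mono_on hπ
      ((hc2.abs.const_mul (1 / R)).intervalIntegrable _ _) (hcont.intervalIntegrable _ _)
      fun θ _ => ?_
    rw [conηT R hR θ, abs_mul, abs_of_pos hRpos, ← mul_assoc, one_div, inv_mul_cancel₀ hRpos.ne',
      one_mul]
    unfold dens
    have hX : 0 < exp (4 * U R θ) / (4 * R ^ 2) := by positivity
    have hX2 : exp (4 * U R θ) / (2 * R ^ 2) = 2 * (exp (4 * U R θ) / (4 * R ^ 2)) := by
      field_simp
      norm_num
    rw [hX2]
    simp only
    generalize exp (4 * U R θ) / (4 * R ^ 2) = X at *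
    rw [abs_le]
    constructor
    · nlinarith [sq_nonneg (pdR U R θ + pdT U R θ),
        mul_nonneg hX.le (sq_nonneg (pdR A R θ + pdT A R θ))]
    · nlinarith [sq_nonneg (pdR U R θ - pdT U R θ),
        mul_nonneg hX.le (sq_nonneg (pdR A R θ - pdT A R θ))]
  · have hmem : ∀ x ∈ uIcc R₀ R ×ˢ uIcc (0:ℝ) (2 * π), R₀ ≤ x.1 := by
      intro x hx
      have := hx.1
      rw [uIcc_of_le hR] at this
      exact this.1
    have hmem' : ∀ x ∈ Ioo (min R₀ R) (max R₀ R) ×ˢ Ioo (min 0 (2 * π)) (max 0 (2 * π)),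
        R₀ ≤ x.1 := by
      intro x hx
      have := hx.1.1
      rw [min_eq_left hR] at this
      exact this.le
    have key := integral2_divergence_prod_of_hasFDerivAt (dens U A) (flux U A)
      (fderiv ℝ (dens U A)) (fderiv ℝ (flux U A)) R₀ 0 R (2 * π)
      (fun x hx => (hdc x.1 (hmem x hx) x.2).continuousAt.continuousWithinAt)
      (fun x hx => (hfc x.1 (hmem x hx) x.2).continuousAt.continuousWithinAt)
      (fun x hx => ((hdc x.1 (hmem' x hx) x.2).differentiableAt (by simp)).hasFDerivAt)
      (fun x hx => ((hfc x.1 (hmem' x hx) x.2).differentiableAt (by simp)).hasFDerivAt)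
      (by
        refine ContinuousOn.integrableOn_compact (isCompact_uIcc.prod isCompact_uIcc) ?_
        intro x hx
        refine ContinuousAt.continuousWithinAt ?_
        have c1 := ((hdc x.1 (hmem x hx) x.2).fderiv_right (m := (⊤ : ℕ∞)) (by simp)).continuousAt
        have c2 := ((hfc x.1 (hmem x hx) x.2).fderiv_right (m := (⊤ : ℕ∞)) (by simp)).continuousAt
        exact (c1.clm_apply continuousAt_const).add (c2.clm_apply continuousAt_const))
    have hper : ∀ x, flux U A (x, 2 * π) = flux U A (x, 0) := by
      intro x
      have p1 := per_R hUper x 0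
      have p2 := per_T hUper x 0
      have p3 := per_R hAper x 0
      have p4 := per_T hAper x 0
      have p5 := hUper x 0
      rw [zero_add] at p1 p2 p3 p4 p5
      simp only [flux, p1, p2, p3, p4, p5]
    simp only [hper, sub_self, zero_add] at key
    rw [← hE', ← hE'] at key
    have hle : (∫ x in R₀..R, ∫ y in (0:ℝ)..(2 * π),
        fderiv ℝ (dens U A) (x, y) (1, 0) + fderiv ℝ (flux U A) (x, y) (0, 1)) ≤ 0 := by
      rw [← neg_nonneg, ← intervalIntegral.integral_neg]
      refine intervalIntegral.integral_nonneg hR fun x hx => ?_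
      rw [← intervalIntegral.integral_neg]
      refine intervalIntegral.integral_nonneg hπ fun y _ => ?_
      rw [neg_nonneg]
      exact div_nonpos hU hA x y (hR₀.trans_le hx.1) (eqU x hx.1 y) (eqA x hx.1 y)
    linarith
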